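/- Let G be a discrete group and let ∂_F G be a Furstenberg boundary of G. For s ∈ G let Fix(s) = {x ∈ ∂_F G : sx = x}. Then each set Fix(s) is clopen, and there exists a G-equivariant u.c.p. map Φ : C*_λ(G) → C(∂_F G) such that Φ(λ_s) equals the indicator function of Fix(s) for every s ∈ G. -/

import Mathlib

noncomputable section
open scoped ENNReal ComplexOrder lp
open MeasureTheory
set_option maxHeartbeats 1000000
set_option synthInstance.maxHeartbeats 1000000

universe u

variable {G : Type u} [Group G]

theorem translat_mem (g : G) (f : ℓ²(G, ℂ)) : Memℓp (fun h => f (g⁻¹ * h)) 2 := by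
  have hf : Summable fun i : G => ‖f i‖ ^ (2 : ℝ≥0∞).toReal :=
    (memℓp_gen_iff (by norm_num)).1 (lp.memℓp f)
  exact memℓp_gen ((Equiv.mulLeft g⁻¹).summable_iff.2 hf)

/-- The left regular representation of `g ∈ G` as a linear isometric bijection of `ℓ²(G)`,
given by `(λ_g ξ)(h) = ξ(g⁻¹ h)`. -/
def lregE (g : G) : ℓ²(G, ℂ) ≃ₗᵢ[ℂ] ℓ²(G, ℂ) :=
{ toFun := fun f => ⟨fun h => f (g⁻¹ * h), translat_mem g f⟩
  invFun := fun f => ⟨fun h => f (g * h), by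
    have := translat_mem g⁻¹ f; simp only [inv_inv] at this; exact this⟩
  map_add' := by intro f₁ f₂; ext h; simp [lp.coeFn_add]; rfl
  map_smul' := by intro c f; ext h; simp [lp.coeFn_smul]
  left_inv := by intro f; ext h; simp
  right_inv := by intro f; ext h; simp
  norm_map' := by
    intro f
    rw [lp.norm_eq_tsum_rpow (by norm_num) f, lp.norm_eq_tsum_rpow (by norm_num)]
    congr 1
    exact (Equiv.mulLeft g⁻¹).tsum_eq (fun h => ‖f h‖ ^ (2 : ℝ≥0∞).toReal) }

/-- The left regular representation `λ` as bounded operators on `ℓ²(G)`. -/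
def lreg (g : G) : ℓ²(G, ℂ) →L[ℂ] ℓ²(G, ℂ) :=
  (lregE g).toContinuousLinearEquiv.toContinuousLinearMap

variable (G) in
/-- The reduced group C*-algebra `C*_λ(G)`: the norm-closed star subalgebra of the algebra of
bounded operators on `ℓ²(G)` generated by the image of the left regular representation. -/
def redCstar : StarSubalgebra ℂ (ℓ²(G, ℂ) →L[ℂ] ℓ²(G, ℂ)) :=
  (StarAlgebra.adjoin ℂ (Set.range (lreg (G := G)))).topologicalClosure

/-- `λ_g` as an element of the reduced group C*-algebra. -/
def uu (g : G) : redCstar G :=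
  ⟨lreg g, StarSubalgebra.le_topologicalClosure _ (StarAlgebra.subset_adjoin ℂ _ ⟨g, rfl⟩)⟩

attribute [irreducible] redCstar lreg lregE uu

/-- `X` is a `G`-boundary: a nonempty compact Hausdorff `G`-space such that for every regular
Borel probability measure `μ` on `X` and every `x ∈ X`, the point mass `δ_x` lies in the
weak* closure of the orbit `Gμ`. -/
def IsBoundary (G X : Type*) [Group G] [TopologicalSpace X] [CompactSpace X] [T2Space X]
    [MulAction G X] [ContinuousConstSMul G X] : Prop :=
  Nonempty X ∧
  letI : MeasurableSpace X := borel X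
  haveI : BorelSpace X := ⟨rfl⟩
  ∀ (μ : ProbabilityMeasure X) (x : X),
    (⟨Measure.dirac x, Measure.dirac.isProbabilityMeasure⟩ : ProbabilityMeasure X) ∈
      closure {ν : ProbabilityMeasure X |
        ∃ g : G, ν = μ.map ((continuous_const_smul g).measurable.aemeasurable (μ := μ.toMeasure))
          (f := (g • ·))}

/-- `Y` is a Furstenberg boundary of `G`: a `G`-boundary admitting a continuous `G`-equivariant
surjection onto every `G`-boundary. -/
def IsFurstenberg (G Y : Type u) [Group G] [TopologicalSpace Y] [CompactSpace Y] [T2Space Y]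
    [MulAction G Y] [ContinuousConstSMul G Y] : Prop :=
  IsBoundary G Y ∧
  ∀ (X : Type u) (iT : TopologicalSpace X) (iC : @CompactSpace X iT) (iH : @T2Space X iT)
    (iM : MulAction G X) (iS : @ContinuousConstSMul G X iT iM.toSMul),
    @IsBoundary G X _ iT iC iH iM iS →
      ∃ q : Y → X, @Continuous _ _ _ iT q ∧ Function.Surjective q ∧
        ∀ (g : G) (y : Y), q (g • y) = g • q y

/-- A linear map into `C(Y, ℂ)` is unital completely positive: it is unital and its entrywise
extensions to matrix algebras map positive elements to positive elements. -/
def IsUCP {Y : Type u} [TopologicalSpace Y] (Φ : redCstar G →L[ℂ] C(Y, ℂ)) : Prop :=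
  Φ 1 = 1 ∧ ∀ (n : ℕ) (M : Matrix (Fin n) (Fin n) (redCstar G)),
    (∃ N : Matrix (Fin n) (Fin n) (redCstar G), M = star N * N) →
      ∃ P : Matrix (Fin n) (Fin n) C(Y, ℂ), M.map Φ = star P * P

/-- `G`-equivariance of a map `C*_λ(G) → C(Y)`, for the conjugation action on `C*_λ(G)` and
the translation action on `C(Y)`: `Φ(λ_g a λ_g⁻¹)(y) = Φ(a)(g⁻¹ y)`. -/
def IsEquivariant {Y : Type u} [TopologicalSpace Y] [MulAction G Y]
    (Φ : redCstar G →L[ℂ] C(Y, ℂ)) : Prop :=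
  ∀ (g : G) (a : redCstar G) (y : Y), Φ (uu g * a * uu g⁻¹) y = Φ a (g⁻¹ • y)

section SqrtPart
open scoped MatrixOrder Matrix.Norms.L2Operator

theorem exists_matrix_sqrt {Y : Type u} [TopologicalSpace Y] (n : ℕ)
    (A : Matrix (Fin n) (Fin n) C(Y, ℂ))
    (hA : ∀ y, (A.map (fun f => f y)).PosSemidef) :
    ∃ P : Matrix (Fin n) (Fin n) C(Y, ℂ), A = star P * P := by
  have hnn : ∀ y, 0 ≤ A.map (fun f => f y) := fun y => (Matrix.nonneg_iff_posSemidef).2 (hA y)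
  have hcont : Continuous (fun y => A.map (fun f => f y)) := by
    refine continuous_matrix fun i j => ?_
    exact (A i j).continuous
  have hs : Continuous (fun y => cfc NNReal.sqrt (A.map (fun f => f y))) := by
    refine Continuous.cfc_nnreal_of_mem_nhdsSet (s := Set.univ) _ Filter.univ_mem hcont hnn ?_
    exact NNReal.continuous_sqrt.continuousOn
  refine ⟨Matrix.of fun i j => ⟨fun y => cfc NNReal.sqrt (A.map (fun f => f y)) i j,
    hs.matrix_elem i j⟩, ?_⟩
  ext i j y
  have h1 := CFC.sqrt_mul_sqrt_self (A.map (fun f => f y)) (hnn y)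
  have h2 : star (CFC.sqrt (A.map (fun f => f y))) = CFC.sqrt (A.map (fun f => f y)) :=
    (IsSelfAdjoint.of_nonneg (CFC.sqrt_nonneg _)).star_eq
  have h3 : star (CFC.sqrt (A.map (fun f => f y))) * CFC.sqrt (A.map (fun f => f y)) =
    A.map (fun f => f y) := by rw [h2, h1]
  have h4 := congrFun (congrFun h3 i) j
  rw [CFC.sqrt_eq_cfc] at h4
  simp only [Matrix.map_apply] at h4
  rw [← h4]
  simp [Matrix.mul_apply, ContinuousMap.sum_apply, Matrix.star_apply]

end SqrtPart

theorem frolik {Y : Type*} [TopologicalSpace Y] [T2Space Y] [ExtremallyDisconnected Y]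
    (s : Y ≃ₜ Y) : IsOpen {x : Y | s x = x} := by
  let 𝒮 : Set (Set Y) := {U | IsOpen U ∧ ∀ x ∈ U, s x ∉ U}
  obtain ⟨U, hU⟩ : ∃ U, Maximal (· ∈ 𝒮) U := by
    refine zorn_subset 𝒮 ?_
    intro c hc hchain
    refine ⟨⋃₀ c, ⟨isOpen_sUnion fun t ht => (hc ht).1, ?_⟩, fun t ht => Set.subset_sUnion_of_mem ht⟩
    rintro x ⟨t, ht, hxt⟩ ⟨t', ht', hxt'⟩
    rcases hchain.total ht ht' with h | h
    · exact (hc ht').2 x (h hxt) hxt'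
    · exact (hc ht).2 x hxt (h hxt')
  have hUo : IsOpen U := hU.prop.1
  have hUd : ∀ x ∈ U, s x ∉ U := hU.prop.2
  have hcl : IsOpen (closure U) := ExtremallyDisconnected.open_closure U hUo
  have hclU : closure U ∈ 𝒮 := by
    refine ⟨hcl, ?_⟩
    have h1 : Disjoint U (s ⁻¹' U) := Set.disjoint_left.2 hUd
    have h2 : Disjoint (closure U) (s ⁻¹' U) := h1.closure_left (hUo.preimage s.continuous)
    have h3 : Disjoint (closure U) (closure (s ⁻¹' U)) := h2.closure_right hcl
    rw [← s.preimage_closure] at h3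
    exact fun x hx hx' => Set.disjoint_left.1 h3 hx hx'
  have hUc : IsClosed U := by
    have : closure U ⊆ U := hU.le_of_ge hclU subset_closure
    exact closure_subset_iff_isClosed.1 this
  have key : {x : Y | s x = x} = (U ∪ s ⁻¹' U ∪ s.symm ⁻¹' U)ᶜ := by
    ext x
    simp only [Set.mem_setOf_eq, Set.mem_compl_iff, Set.mem_union, Set.mem_preimage, not_or]
    constructor
    · intro hx
      have hx' : s.symm x = x := by rw [s.symm_apply_eq, hx]
      rw [hx, hx']
      have : x ∉ U := fun h => hUd x h (by rwa [hx])
      exact ⟨⟨this, this⟩, this⟩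
    · rintro ⟨⟨h1, h2⟩, h3⟩
      by_contra hne
      obtain ⟨V, W, hV, hW, hxV, hxW, hVW⟩ := t2_separation hne
      let W' := W ∩ s ⁻¹' V ∩ (U ∪ s ⁻¹' U ∪ s.symm ⁻¹' U)ᶜ
      have hW' : IsOpen W' := by
        refine (hW.inter (hV.preimage s.continuous)).inter ?_
        exact ((hUc.union (hUc.preimage s.continuous)).union
          (hUc.preimage s.symm.continuous)).isOpen_compl
      have hmem : U ∪ W' ∈ 𝒮 := by
        refine ⟨hUo.union hW', ?_⟩
        rintro z (hz | hz) (hz' | hz')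
        · exact hUd z hz hz'
        · exact hz'.2 (Or.inr (by simpa using hz))
        · exact hz.2 (Or.inl (Or.inr hz'))
        · exact Set.disjoint_left.1 hVW hz.1.2 hz'.1.1
      have : U ∪ W' ⊆ U := hU.le_of_ge hmem Set.subset_union_left
      refine h1 (this (Or.inr ⟨⟨hxW, hxV⟩, ?_⟩))
      simp only [Set.mem_compl_iff, Set.mem_union, Set.mem_preimage, not_or]
      exact ⟨⟨h1, h2⟩, h3⟩
  rw [key]
  exact ((hUc.union (hUc.preimage s.continuous)).union
          (hUc.preimage s.symm.continuous)).isOpen_compl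

theorem exists_measure_of_state {X : Type*} [TopologicalSpace X] [CompactSpace X] [T2Space X]
    [MeasurableSpace X] [BorelSpace X]
    (Λ : C(X, ℝ) →ₗ[ℝ] ℝ) (hpos : ∀ f : C(X, ℝ), 0 ≤ f → 0 ≤ Λ f) (h1 : Λ 1 = 1) :
    ∃ μ : ProbabilityMeasure X, ∀ f : C(X, ℝ), ∫ x, f x ∂(μ : Measure X) = Λ f := by
  let Λ' : CompactlySupportedContinuousMap X ℝ →ₚ[ℝ] ℝ := PositiveLinearMap.mk₀
    { toFun := fun f => Λ f.toContinuousMap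
      map_add' := fun f g => by rw [← map_add]; rfl
      map_smul' := fun c f => by rw [← map_smul]; rfl }
    (fun f hf => hpos _ hf)
  have hIntg : ∀ f : C(X, ℝ), ∫ x, f x ∂(RealRMK.rieszMeasure Λ') = Λ f := by
    intro f
    exact RealRMK.integral_rieszMeasure Λ' ⟨f, HasCompactSupport.of_compactSpace _⟩
  have hfin : IsFiniteMeasure (RealRMK.rieszMeasure Λ') := inferInstance
  have hp : IsProbabilityMeasure (RealRMK.rieszMeasure Λ') := by
    have := hIntg 1
    simp [h1] at this
    exact isProbabilityMeasure_iff_real.2 this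
  exact ⟨⟨_, hp⟩, hIntg⟩

theorem IsBoundary.exists_lt {G X : Type*} [Group G] [TopologicalSpace X] [CompactSpace X]
    [T2Space X] [MulAction G X] [ContinuousConstSMul G X] (hX : IsBoundary G X)
    (Λ : C(X, ℝ) →ₗ[ℝ] ℝ) (hpos : ∀ f : C(X, ℝ), 0 ≤ f → 0 ≤ Λ f) (h1 : Λ 1 = 1)
    (x : X) (f : C(X, ℝ)) (hf : f x = 0) (ε : ℝ) (hε : 0 < ε) :
    ∃ g : G, Λ (f.comp ⟨(g • ·), continuous_const_smul g⟩) < ε := by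
  letI : MeasurableSpace X := borel X
  haveI : BorelSpace X := ⟨rfl⟩
  obtain ⟨μ, hμ⟩ := exists_measure_of_state Λ hpos h1
  have h : diracProba x ∈ closure {ν : ProbabilityMeasure X |
        ∃ g : G, ν = μ.map ((continuous_const_smul g).measurable.aemeasurable (μ := μ.toMeasure))
          (f := (g • ·))} := hX.2 μ x
  rw [mem_closure_iff_clusterPt, clusterPt_iff_ultrafilter] at h
  obtain ⟨u, hu1, hu2⟩ := h
  have ht := (ProbabilityMeasure.tendsto_iff_forall_integral_tendsto (μs := id) (F := (u : Filter _))).1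
    (Filter.tendsto_id'.2 hu2)
    (BoundedContinuousFunction.mkOfCompact f)
  simp only [BoundedContinuousFunction.mkOfCompact_apply] at ht
  have hd : ∫ ω, f ω ∂((diracProba x : ProbabilityMeasure X) : Measure X) = 0 := by
    rw [diracProba, ProbabilityMeasure.coe_mk, integral_dirac, hf]
  rw [hd] at ht
  have hev := (ht.eventually_lt_const hε).and (Filter.le_principal_iff.1 hu1)
  obtain ⟨ν, hν1, g, rfl⟩ := hev.exists
  refine ⟨g, ?_⟩
  rw [← hμ]
  refine lt_of_eq_of_lt ?_ hν1
  change _ = ∫ y, f y ∂(Measure.map (g • ·) (μ : Measure X))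
  rw [integral_map]
  · rfl
  · exact (continuous_const_smul g).measurable.aemeasurable
  · exact f.continuous.aestronglyMeasurable

theorem isBoundary_of_forall {G X : Type*} [Group G] [TopologicalSpace X] [CompactSpace X]
    [T2Space X] [MulAction G X] [ContinuousConstSMul G X] [Nonempty X] (D : Set X) (hD : Dense D)
    (h : ∀ Λ : C(X, ℝ) →ₗ[ℝ] ℝ, (∀ f : C(X, ℝ), 0 ≤ f → 0 ≤ Λ f) → Λ 1 = 1 →
      ∀ x ∈ D, ∀ f : C(X, ℝ), 0 ≤ f → f x = 0 → ∀ ε > 0,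
      ∃ g : G, Λ (f.comp ⟨(g • ·), continuous_const_smul g⟩) < ε) : IsBoundary G X := by
  refine ⟨inferInstance, ?_⟩
  letI : MeasurableSpace X := borel X
  haveI : BorelSpace X := ⟨rfl⟩
  classical
  intro μ
  set O := {ν : ProbabilityMeasure X |
        ∃ g : G, ν = μ.map ((continuous_const_smul g).measurable.aemeasurable (μ := μ.toMeasure))
          (f := (g • ·))} with hO
  have hcl : IsClosed {x : X | diracProba x ∈ closure O} :=
    isClosed_closure.preimage continuous_diracProba
  have hmain : ∀ x ∈ D, diracProba x ∈ closure O := by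
    intro x hx
    let Λ : C(X, ℝ) →ₗ[ℝ] ℝ :=
      { toFun := fun f => ∫ y, f y ∂(μ : Measure X)
        map_add' := fun f g => integral_add (f.continuous.integrable_of_hasCompactSupport
          (HasCompactSupport.of_compactSpace _)) (g.continuous.integrable_of_hasCompactSupport
          (HasCompactSupport.of_compactSpace _))
        map_smul' := fun c f => by simp [integral_const_mul] }
    have hh := h Λ (fun f hf => integral_nonneg hf) (by simp [Λ]) x hx
    have hch : ∀ p : Finset C(X, ℝ) × ℕ, ∃ g : G,
        Λ ((∑ k ∈ p.1, |k - ContinuousMap.const X (k x)|).comp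
          ⟨(g • ·), continuous_const_smul g⟩) < 1 / ((p.2 : ℝ) + 1) := by
      intro p
      refine hh _ (Finset.sum_nonneg fun k _ => abs_nonneg _) ?_ _ (by positivity)
      simp [ContinuousMap.sum_apply]
    choose g hg using hch
    refine mem_closure_of_tendsto (b := Filter.atTop)
      (f := fun p => μ.map ((continuous_const_smul (g p)).measurable.aemeasurable (μ := μ.toMeasure))
          (f := ((g p) • ·))) ?_ (Filter.Eventually.of_forall fun p => ⟨g p, rfl⟩)
    rw [ProbabilityMeasure.tendsto_iff_forall_integral_tendsto]
    intro k
    have hd : ∫ ω, k ω ∂((diracProba x : ProbabilityMeasure X) : Measure X) = k x := by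
      simp only [diracProba, ProbabilityMeasure.coe_mk]
      rw [integral_dirac]
    rw [hd, Metric.tendsto_nhds]
    intro ε hε
    obtain ⟨N, hN⟩ := exists_nat_one_div_lt hε
    filter_upwards [Filter.eventually_ge_atTop (({k.toContinuousMap}, N) : Finset C(X, ℝ) × ℕ)] with p hp
    have hp1 : k.toContinuousMap ∈ p.1 := by simpa using hp.1
    have hp2 : N ≤ p.2 := hp.2
    simp only [ProbabilityMeasure.toMeasure_map]
    rw [integral_map (continuous_const_smul (g p)).measurable.aemeasurable
      k.continuous.aestronglyMeasurable]
    have hIntg : ∀ f : C(X, ℝ), Integrable f (μ : Measure X) := fun f =>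
      f.continuous.integrable_of_hasCompactSupport (HasCompactSupport.of_compactSpace _)
    have e1 : ∫ y, k (g p • y) ∂(μ : Measure X) - k x = ∫ y, (k (g p • y) - k x) ∂(μ : Measure X) := by
      have hk : Integrable (fun y => k (g p • y)) (μ : Measure X) :=
        hIntg (k.toContinuousMap.comp ⟨((g p) • ·), continuous_const_smul (g p)⟩)
      rw [integral_sub hk (integrable_const _)]
      simp
    rw [Real.dist_eq, e1]
    calc |∫ y, (k (g p • y) - k x) ∂(μ : Measure X)|
        ≤ ∫ y, |k (g p • y) - k x| ∂(μ : Measure X) := abs_integral_le_integral_abs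
      _ ≤ Λ ((∑ k ∈ p.1, |k - ContinuousMap.const X (k x)|).comp
          ⟨((g p) • ·), continuous_const_smul (g p)⟩) := by
          refine integral_mono (hIntg (|k.toContinuousMap - ContinuousMap.const X (k x)|.comp
            ⟨((g p) • ·), continuous_const_smul (g p)⟩)) (hIntg _) ?_
          intro y
          have := Finset.single_le_sum (f := fun k : C(X, ℝ) => |k (g p • y) - k x|)
            (fun k _ => abs_nonneg _) hp1
          simpa [ContinuousMap.sum_apply] using this
      _ < 1 / ((p.2 : ℝ) + 1) := hg p
      _ ≤ 1 / ((N : ℝ) + 1) := by gcongr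
      _ < ε := hN
  intro x
  have : x ∈ closure D := hD x
  exact (hcl.closure_subset_iff.2 hmain) this

/-- Precomposition with a continuous linear map, as a map of weak duals. -/
def wprecomp {E F : Type*} [NormedAddCommGroup E] [NormedSpace ℝ E] [NormedAddCommGroup F]
    [NormedSpace ℝ F] (T : E →L[ℝ] F) : WeakDual ℝ F →L[ℝ] WeakDual ℝ E where
  toFun φ := StrongDual.toWeakDual ((WeakDual.toStrongDual φ).comp T)
  map_add' _ _ := rfl
  map_smul' _ _ := rfl
  cont := WeakDual.continuous_of_continuous_eval fun y => WeakDual.eval_continuous (T y)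

theorem wprecomp_apply {E F : Type*} [NormedAddCommGroup E] [NormedSpace ℝ E]
    [NormedAddCommGroup F] [NormedSpace ℝ F] (T : E →L[ℝ] F) (φ : WeakDual ℝ F) (e : E) :
    wprecomp T φ e = φ (T e) := rfl

/-- Hahn-Banach separation in the weak dual. -/
theorem mem_of_forall_weakDual {E : Type*} [NormedAddCommGroup E] [NormedSpace ℝ E]
    (K : Set (WeakDual ℝ E)) (hc : Convex ℝ K) (hcl : IsClosed K) (b : WeakDual ℝ E)
    (h : ∀ (e : E) (u : ℝ), (∀ m ∈ K, m e ≤ u) → b e ≤ u) : b ∈ K := by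
  by_contra hb
  haveI : LocallyConvexSpace ℝ (WeakDual ℝ E) :=
    inferInstanceAs (LocallyConvexSpace ℝ (WeakBilin (topDualPairing ℝ E)))
  obtain ⟨f, u, hf1, hf2⟩ := geometric_hahn_banach_closed_point hc hcl hb
  obtain ⟨e, he⟩ := LinearMap.dualEmbedding_surjective (topDualPairing ℝ E) f
  have hfe : ∀ m : WeakDual ℝ E, f m = m e := fun m => by rw [← he]; rfl
  have := h e u (fun m hm => by rw [← hfe]; exact (hf1 m hm).le)
  rw [hfe] at hf2
  linarith

/-- Minimal nonempty compact convex invariant sets. -/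
theorem exists_minimal_invariant {V I : Type*} [AddCommGroup V] [Module ℝ V] [TopologicalSpace V]
    [T2Space V] (T : I → V → V) (K : Set V) (hK : IsCompact K) (hKc : Convex ℝ K)
    (hKn : K.Nonempty) (hKT : ∀ g, ∀ m ∈ K, T g m ∈ K) :
    ∃ K₀ ⊆ K, IsCompact K₀ ∧ Convex ℝ K₀ ∧ K₀.Nonempty ∧ (∀ g, ∀ m ∈ K₀, T g m ∈ K₀) ∧
      ∀ C ⊆ K₀, IsCompact C → Convex ℝ C → C.Nonempty → (∀ g, ∀ m ∈ C, T g m ∈ C) → C = K₀ := by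
  let 𝒮 : Set (Set V) := {C | C ⊆ K ∧ IsCompact C ∧ Convex ℝ C ∧ C.Nonempty ∧
    ∀ g, ∀ m ∈ C, T g m ∈ C}
  obtain ⟨K₀, hK₀⟩ : ∃ K₀, Minimal (· ∈ 𝒮) K₀ := by
    refine zorn_superset 𝒮 ?_
    intro c hc hchain
    rcases c.eq_empty_or_nonempty with rfl | hne
    · exact ⟨K, ⟨subset_rfl, hK, hKc, hKn, hKT⟩, by simp⟩
    · obtain ⟨C₀, hC₀⟩ := hne
      have hcl : IsClosed (⋂₀ c) := isClosed_sInter fun t ht => (hc ht).2.1.isClosed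
      refine ⟨⋂₀ c, ⟨(Set.sInter_subset_of_mem hC₀).trans (hc hC₀).1, ?_, ?_, ?_, ?_⟩,
        fun s hs => Set.sInter_subset_of_mem hs⟩
      · exact (hc hC₀).2.1.of_isClosed_subset hcl (Set.sInter_subset_of_mem hC₀)
      · exact convex_sInter fun t ht => (hc ht).2.2.1
      · haveI : Nonempty c := ⟨⟨C₀, hC₀⟩⟩
        refine IsCompact.nonempty_sInter_of_directed_nonempty_isCompact_isClosed ?_
          (fun t ht => (hc ht).2.2.2.1) (fun t ht => (hc ht).2.1)
          (fun t ht => (hc ht).2.1.isClosed)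
        intro s hs t ht
        rcases hchain.total hs ht with h | h
        · exact ⟨s, hs, subset_rfl, h⟩
        · exact ⟨t, ht, h, subset_rfl⟩
      · intro g m hm t ht
        exact (hc ht).2.2.2.2 g m (hm t ht)
  refine ⟨K₀, hK₀.prop.1, hK₀.prop.2.1, hK₀.prop.2.2.1, hK₀.prop.2.2.2.1, hK₀.prop.2.2.2.2, ?_⟩
  intro C hC h1 h2 h3 h4
  exact Set.Subset.antisymm hC (hK₀.le_of_le ⟨hC.trans hK₀.prop.1, h1, h2, h3, h4⟩ hC)

/-- A state on `C(X)` whose barycenter is an extreme point is the evaluation there. -/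
theorem state_eq_eval {E : Type*} [NormedAddCommGroup E] [NormedSpace ℝ E]
    (K₀ : Set (WeakDual ℝ E)) {X : Set (WeakDual ℝ E)} (hXc : CompactSpace X)
    (ι : E →L[ℝ] C(X, ℝ)) (hι : ∀ e (m : X), ι e m = m.1 e)
    (hbary : ∀ φ : WeakDual ℝ C(X, ℝ), (∀ f, 0 ≤ f → 0 ≤ φ f) → φ 1 = 1 → wprecomp ι φ ∈ K₀)
    (x : X) (hx : x.1 ∈ K₀.extremePoints ℝ) (φ : WeakDual ℝ C(X, ℝ))
    (hpos : ∀ f, 0 ≤ f → 0 ≤ φ f) (h1 : φ 1 = 1) (hφx : wprecomp ι φ = x.1) (F : C(X, ℝ)) :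
    φ F = F x := by
  have hxe : ∀ e, φ (ι e) = x.1 e := fun e => by rw [← hφx]; rfl
  have key : ∀ (k : C(X, ℝ)) (e : E), φ (k * ι e) = φ k * x.1 e := by
    intro k e
    set c : ℝ := 1 / (4 * (‖k‖ + 1)) with hc
    have hk0 : 0 ≤ ‖k‖ := norm_nonneg k
    have hcpos : 0 < c := by positivity
    have hck : c * ‖k‖ ≤ 1 / 4 := by
      rw [hc, div_mul_eq_mul_div, div_le_div_iff₀ (by positivity) (by positivity)]; linarith
    set h : C(X, ℝ) := (1 / 2 : ℝ) • 1 + c • k with hh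
    have hkb : ∀ m, |c * k m| ≤ 1 / 4 := by
      intro m
      rw [abs_mul, abs_of_pos hcpos]
      exact (mul_le_mul_of_nonneg_left (k.norm_coe_le_norm m) hcpos.le).trans hck
    have hlow : 0 ≤ h - (1 / 4 : ℝ) • 1 := by
      intro m
      have := (abs_le.1 (hkb m)).1
      change (0 : ℝ) ≤ 1 / 2 * 1 + c * k m - 1 / 4 * 1
      linarith
    have hup : 0 ≤ (3 / 4 : ℝ) • 1 - h := by
      intro m
      have := (abs_le.1 (hkb m)).2
      change (0 : ℝ) ≤ 3 / 4 * 1 - (1 / 2 * 1 + c * k m)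
      linarith
    set t := φ h with ht
    have ht1 : 1 / 4 ≤ t := by
      have := hpos _ hlow
      rw [map_sub, map_smul, h1, smul_eq_mul] at this
      linarith
    have ht2 : t ≤ 3 / 4 := by
      have := hpos _ hup
      rw [map_sub, map_smul, h1, smul_eq_mul] at this
      linarith
    have hh0 : ∀ m, 0 ≤ h m := fun m => by
      have : (0 : ℝ) ≤ h m - 1 / 4 * 1 := hlow m
      linarith
    have hh1 : ∀ m, h m ≤ 1 := fun m => by
      have : (0 : ℝ) ≤ 3 / 4 * 1 - h m := hup m
      linarith
    set φ₁ : WeakDual ℝ C(X, ℝ) := t⁻¹ • wprecomp (ContinuousLinearMap.mul ℝ C(X, ℝ) h) φ with hφ₁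
    set φ₂ : WeakDual ℝ C(X, ℝ) :=
      (1 - t)⁻¹ • wprecomp (ContinuousLinearMap.mul ℝ C(X, ℝ) (1 - h)) φ with hφ₂
    have e1 : ∀ f, φ₁ f = t⁻¹ * φ (h * f) := fun f => rfl
    have e2 : ∀ f, φ₂ f = (1 - t)⁻¹ * φ ((1 - h) * f) := fun f => rfl
    have hm1 : wprecomp ι φ₁ ∈ K₀ := by
      refine hbary _ (fun f hf => ?_) ?_
      · rw [e1]
        refine mul_nonneg (inv_nonneg.2 (by linarith)) (hpos _ fun m => ?_)
        exact mul_nonneg (hh0 m) (hf m)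
      · rw [e1, mul_one, inv_mul_cancel₀ (by linarith)]
    have hm2 : wprecomp ι φ₂ ∈ K₀ := by
      refine hbary _ (fun f hf => ?_) ?_
      · rw [e2]
        refine mul_nonneg (inv_nonneg.2 (by linarith)) (hpos _ fun m => ?_)
        exact mul_nonneg (sub_nonneg.2 (hh1 m)) (hf m)
      · rw [e2, mul_one, map_sub, h1, inv_mul_cancel₀ (by linarith)]
    have hseg : x.1 ∈ openSegment ℝ (wprecomp ι φ₁) (wprecomp ι φ₂) := by
      refine ⟨t, 1 - t, by linarith, by linarith, by ring, ?_⟩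
      refine DFunLike.ext _ _ fun e' => ?_
      change t * (t⁻¹ * φ (h * ι e')) + (1 - t) * ((1 - t)⁻¹ * φ ((1 - h) * ι e')) = _
      rw [mul_inv_cancel_left₀ (by linarith), mul_inv_cancel_left₀ (by linarith), ← map_add,
        ← hxe]
      congr 1
      ring
    have hfin : wprecomp ι φ₁ = x.1 := ((mem_extremePoints.1 hx).2 _ hm1 _ hm2 hseg).1
    have hfin' : t⁻¹ * φ (h * ι e) = x.1 e := by rw [← hfin]; rfl
    have h3 : φ (h * ι e) = t * x.1 e := by
      rw [← hfin', mul_inv_cancel_left₀ (by linarith)]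
    have h4 : h * ι e = (1 / 2 : ℝ) • ι e + c • (k * ι e) := by
      rw [hh, add_mul, smul_mul_assoc, smul_mul_assoc, one_mul]
    have h5 : t = 1 / 2 + c * φ k := by
      rw [ht, hh, map_add, map_smul, map_smul, h1]; simp
    rw [h4, map_add, map_smul, map_smul, hxe, h5] at h3
    simp only [smul_eq_mul] at h3
    have : c * φ (k * ι e) = c * (φ k * x.1 e) := by linarith
    exact mul_left_cancel₀ hcpos.ne' this
  let A : Subalgebra ℝ C(X, ℝ) :=
    { carrier := {a | ∀ k, φ (k * a) = φ k * a x}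
      mul_mem' := fun {a b} ha hb k => by
        rw [← mul_assoc, hb, ha, ContinuousMap.mul_apply, mul_assoc]
      add_mem' := fun {a b} ha hb k => by
        rw [mul_add, map_add, ha, hb, ContinuousMap.add_apply, mul_add]
      algebraMap_mem' := fun r k => by
        rw [Algebra.algebraMap_eq_smul_one, mul_smul_comm, mul_one, map_smul]
        simp [mul_comm] }
  have hsep : A.SeparatesPoints := by
    intro m m' hne
    have : m.1 ≠ m'.1 := fun h => hne (Subtype.ext h)
    obtain ⟨e, he⟩ := DFunLike.ne_iff.1 this
    refine ⟨ι e, ⟨ι e, fun k => by rw [key, hι], rfl⟩, ?_⟩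
    rw [hι, hι]
    exact he
  have htop := ContinuousMap.subalgebra_topologicalClosure_eq_top_of_separatesPoints A hsep
  have hcl : IsClosed (A : Set C(X, ℝ)) := by
    have : (A : Set C(X, ℝ)) = ⋂ k, {a | φ (k * a) = φ k * a x} := by
      ext a; simp [A]
    rw [this]
    refine isClosed_iInter fun k => isClosed_eq ?_ ?_
    · exact (WeakDual.toStrongDual φ).continuous.comp (continuous_const.mul continuous_id)
    · exact continuous_const.mul (continuous_eval_const x)
  have hF : F ∈ A := by
    have : F ∈ A.topologicalClosure := by rw [htop]; trivial
    rw [← SetLike.mem_coe, Subalgebra.topologicalClosure_coe, hcl.closure_eq] at this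
    exact this
  have := hF 1
  rwa [one_mul, h1, one_mul] at this

theorem abs_state_le {X : Type*} [TopologicalSpace X] [CompactSpace X]
    (Λ : C(X, ℝ) →ₗ[ℝ] ℝ) (hpos : ∀ f : C(X, ℝ), 0 ≤ f → 0 ≤ Λ f) (h1 : Λ 1 = 1)
    (f : C(X, ℝ)) : |Λ f| ≤ ‖f‖ := by
  rw [abs_le]
  constructor
  · have := hpos (f + ‖f‖ • 1) (fun m => by
      have h := (abs_le.1 (f.norm_coe_le_norm m)).1
      change (0 : ℝ) ≤ f m + ‖f‖ * 1
      linarith)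
    rw [map_add, map_smul, h1, smul_eq_mul] at this
    linarith
  · have := hpos (‖f‖ • 1 - f) (fun m => by
      have h := (abs_le.1 (f.norm_coe_le_norm m)).2
      change (0 : ℝ) ≤ ‖f‖ * 1 - f m
      linarith)
    rw [map_sub, map_smul, h1, smul_eq_mul] at this
    linarith

theorem exists_boundary_map (G : Type u) [Group G] (Y : Type u)
    [TopologicalSpace Y] [CompactSpace Y] [T2Space Y] [MulAction G Y] [ContinuousConstSMul G Y]
    (hY : IsFurstenberg G Y) {E : Type u} [NormedAddCommGroup E] [NormedSpace ℝ E]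
    (L : G →* (E →L[ℝ] E)) (K : Set (WeakDual ℝ E)) (hK : IsCompact K) (hKc : Convex ℝ K)
    (hKn : K.Nonempty) (hKT : ∀ g, ∀ m ∈ K, wprecomp (L g⁻¹) m ∈ K)
    (hKb : ∀ m ∈ K, ∀ e, |m e| ≤ ‖e‖) :
    ∃ q : Y → WeakDual ℝ E, Continuous q ∧ (∀ y, q y ∈ K) ∧
      ∀ (g : G) (y : Y) (e : E), q (g • y) e = q y (L g⁻¹ e) := by
  obtain ⟨K₀, hK₀K, hK₀, hK₀c, hK₀n, hK₀T, hmin⟩ :=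
    exists_minimal_invariant (fun g : G => wprecomp (L g⁻¹)) K hK hKc hKn hKT
  set T : G → WeakDual ℝ E →L[ℝ] WeakDual ℝ E := fun g => wprecomp (L g⁻¹) with hT
  have hTapp : ∀ g m e, T g m e = m (L g⁻¹ e) := fun g m e => rfl
  have hT1 : ∀ m, T 1 m = m := fun m => DFunLike.ext _ _ fun e => by
    rw [hTapp, inv_one, map_one]; rfl
  have hTmul : ∀ g h m, T (g * h) m = T g (T h m) := fun g h m => DFunLike.ext _ _ fun e => by
    rw [hTapp, hTapp, hTapp, mul_inv_rev, map_mul]; rfl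
  have hTK : ∀ g, ∀ m ∈ K₀, T g m ∈ K₀ := hK₀T
  haveI : LocallyConvexSpace ℝ (WeakDual ℝ E) :=
    inferInstanceAs (LocallyConvexSpace ℝ (WeakBilin (topDualPairing ℝ E)))
  have hext : ∀ g, ∀ m ∈ K₀.extremePoints ℝ, T g m ∈ K₀.extremePoints ℝ := by
    intro g m hm
    rw [mem_extremePoints] at hm ⊢
    refine ⟨hTK g m hm.1, fun a ha b hb hseg => ?_⟩
    have hinv : ∀ a, T g (T g⁻¹ a) = a := fun a => by rw [← hTmul, mul_inv_cancel, hT1]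
    have hinv' : ∀ a, T g⁻¹ (T g a) = a := fun a => by rw [← hTmul, inv_mul_cancel, hT1]
    have := hm.2 _ (hTK g⁻¹ a ha) _ (hTK g⁻¹ b hb) (by
      obtain ⟨s, t, hs, ht, hst, h⟩ := hseg
      refine ⟨s, t, hs, ht, hst, ?_⟩
      rw [← map_smul, ← map_smul, ← map_add, h, hinv'])
    exact ⟨by rw [← this.1, hinv], by rw [← this.2, hinv]⟩
  set X : Set (WeakDual ℝ E) := closure (K₀.extremePoints ℝ) with hX
  have hXK : X ⊆ K₀ := closure_minimal extremePoints_subset hK₀.isClosed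
  have hXcomp : IsCompact X := hK₀.of_isClosed_subset isClosed_closure hXK
  have hXT : ∀ g, ∀ m ∈ X, T g m ∈ X := fun g m hm =>
    map_mem_closure (T g).continuous hm (hext g)
  haveI iC : CompactSpace X := isCompact_iff_compactSpace.1 hXcomp
  letI iM : MulAction G X :=
    { smul := fun g m => ⟨T g m.1, hXT g m.1 m.2⟩
      one_smul := fun m => Subtype.ext (hT1 m.1)
      mul_smul := fun g h m => Subtype.ext (hTmul g h m.1) }
  have hsmul : ∀ (g : G) (m : X), (g • m).1 = T g m.1 := fun g m => rfl
  haveI iS : ContinuousConstSMul G X :=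
    ⟨fun g => ((T g).continuous.comp continuous_subtype_val).subtype_mk _⟩
  have hne : (K₀.extremePoints ℝ).Nonempty := hK₀.extremePoints_nonempty hK₀n
  haveI : Nonempty X := ⟨⟨_, subset_closure hne.some_mem⟩⟩
  let ι : E →L[ℝ] C(X, ℝ) := LinearMap.mkContinuous
    { toFun := fun e => ⟨fun m => m.1 e, (WeakDual.eval_continuous e).comp continuous_subtype_val⟩
      map_add' := fun a b => by ext m; exact map_add m.1 a b
      map_smul' := fun c a => by ext m; exact map_smul m.1 c a } 1 (fun e => by
        rw [one_mul]
        refine (ContinuousMap.norm_le _ (norm_nonneg _)).2 fun m => ?_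
        exact hKb m.1 (hK₀K (hXK m.2)) e)
  have hι : ∀ e (m : X), ι e m = m.1 e := fun e m => rfl
  have hbary : ∀ φ : WeakDual ℝ C(X, ℝ), (∀ f, 0 ≤ f → 0 ≤ φ f) → φ 1 = 1 →
      wprecomp ι φ ∈ K₀ := by
    intro φ hpos h1
    refine mem_of_forall_weakDual K₀ hK₀c hK₀.isClosed _ fun e u hu => ?_
    rw [wprecomp_apply]
    have := hpos (u • 1 - ι e) (fun m => by
      have h := hu m.1 (hXK m.2)
      change (0 : ℝ) ≤ u * 1 - m.1 e
      linarith)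
    rw [map_sub, map_smul, h1, smul_eq_mul] at this
    linarith
  have hXB : IsBoundary G X := by
    refine isBoundary_of_forall {x : X | x.1 ∈ K₀.extremePoints ℝ} ?_ ?_
    · rw [Subtype.dense_iff]
      intro m hm
      refine closure_mono ?_ hm
      intro z hz
      exact ⟨⟨z, subset_closure hz⟩, hz, rfl⟩
    · intro Λ hpos h1 x hx F hF hFx ε hε
      let C : Set (WeakDual ℝ C(X, ℝ)) := {φ | ∀ (f : C(X, ℝ)) (c : ℝ),
        (∀ g : G, c ≤ Λ (f.comp ⟨(g • ·), continuous_const_smul g⟩)) → c ≤ φ f}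
      have hCpos : ∀ φ ∈ C, ∀ f, 0 ≤ f → 0 ≤ φ f := fun φ hφ f hf =>
        hφ f 0 fun g => hpos _ fun m => hf (g • m)
      have hC1 : ∀ φ ∈ C, φ 1 = 1 := by
        intro φ hφ
        refine le_antisymm ?_ ?_
        · have := hφ (-1) (-1) (fun g => by
            have : (-1 : C(X, ℝ)).comp ⟨(g • ·), continuous_const_smul g⟩ = -1 := rfl
            rw [this, map_neg, h1])
          rw [map_neg] at this
          linarith
        · refine hφ 1 1 fun g => ?_
          have : (1 : C(X, ℝ)).comp ⟨(g • ·), continuous_const_smul g⟩ = 1 := rfl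
          rw [this, h1]
      have hCcl : IsClosed C := by
        have : C = ⋂ (f : C(X, ℝ)) (c : ℝ)
          (_ : ∀ g : G, c ≤ Λ (f.comp ⟨(g • ·), continuous_const_smul g⟩)), {φ | c ≤ φ f} := by
          ext φ; simp [C]
        rw [this]
        refine isClosed_iInter fun f => isClosed_iInter fun c => isClosed_iInter fun _ => ?_
        exact isClosed_le continuous_const (WeakDual.eval_continuous f)
      have hCcomp : IsCompact C := by
        refine (WeakDual.isCompact_closedBall (0 : StrongDual ℝ C(X, ℝ)) 1).of_isClosed_subset hCcl ?_
        intro φ hφ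
        simp only [Set.mem_preimage, mem_closedBall_zero_iff]
        refine ContinuousLinearMap.opNorm_le_bound _ zero_le_one fun f => ?_
        rw [one_mul]
        exact abs_state_le (WeakDual.toStrongDual φ).toLinearMap (hCpos φ hφ) (hC1 φ hφ) f
      have hCconv : Convex ℝ C := by
        intro φ hφ ψ hψ a b ha hb hab f c hc
        have h1 := hφ f c hc
        have h2 := hψ f c hc
        change c ≤ a * φ f + b * ψ f
        have : c = a * c + b * c := by rw [← add_mul, hab, one_mul]
        rw [this]
        gcongr
      have hCne : C.Nonempty := by
        refine ⟨StrongDual.toWeakDual (Λ.mkContinuous 1 fun f => ?_), ?_⟩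
        · rw [one_mul]; exact abs_state_le Λ hpos h1 f
        · intro f c hc
          have := hc 1
          change c ≤ Λ f
          convert this using 2
          ext m
          change f m = f ((1 : G) • m)
          rw [one_smul]
      have himg : wprecomp ι '' C = K₀ := by
        refine hmin _ ?_ (hCcomp.image (wprecomp ι).continuous)
          (hCconv.linear_image (wprecomp ι).toLinearMap) (hCne.image _) ?_
        · rintro _ ⟨φ, hφ, rfl⟩
          exact hbary φ (hCpos φ hφ) (hC1 φ hφ)
        · rintro g _ ⟨φ, hφ, rfl⟩
          let S : C(X, ℝ) →L[ℝ] C(X, ℝ) := LinearMap.mkContinuous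
            { toFun := fun f => f.comp ⟨(g • ·), continuous_const_smul g⟩
              map_add' := fun _ _ => rfl
              map_smul' := fun _ _ => rfl } 1 (fun f => by
                rw [one_mul]
                refine (ContinuousMap.norm_le _ (norm_nonneg _)).2 fun m => ?_
                exact f.norm_coe_le_norm (g • m))
          refine ⟨wprecomp S φ, ?_, ?_⟩
          · intro f c hc
            refine hφ _ c fun h => ?_
            convert hc (g * h) using 2
            ext m
            change f (g • h • m) = f ((g * h) • m)
            rw [mul_smul]
          · refine DFunLike.ext _ _ fun e => ?_
            rfl
      have hxK : x.1 ∈ wprecomp ι '' C := by rw [himg]; exact hXK x.2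
      obtain ⟨φ, hφ, hφx⟩ := hxK
      have hev := state_eq_eval K₀ iC ι hι hbary x hx φ (hCpos φ hφ) (hC1 φ hφ) hφx F
      by_contra hcon
      push Not at hcon
      have := hφ F ε hcon
      rw [hev, hFx] at this
      linarith
  obtain ⟨q, hqc, -, hq⟩ := hY.2 X inferInstance iC inferInstance iM iS hXB
  refine ⟨fun y => (q y).1, continuous_subtype_val.comp hqc, fun y => hK₀K (hXK (q y).2), ?_⟩
  intro g y e
  change (q (g • y)).1 e = (q y).1 (L g⁻¹ e)
  rw [hq]
  rfl

open scoped BoundedContinuousFunction in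
/-- Left translation on bounded functions. -/
def transl (G : Type u) [Group G] [TopologicalSpace G] [DiscreteTopology G] :
    G →* ((G →ᵇ ℝ) →L[ℝ] (G →ᵇ ℝ)) where
  toFun g := LinearMap.mkContinuous
    { toFun := fun f => f.compContinuous ⟨fun t => g⁻¹ * t, continuous_of_discreteTopology⟩
      map_add' := fun _ _ => rfl
      map_smul' := fun _ _ => rfl } 1 (fun f => by
        rw [one_mul]
        exact (BoundedContinuousFunction.norm_le (norm_nonneg _)).2
          fun t => f.norm_coe_le_norm (g⁻¹ * t))
  map_one' := by
    ext f t
    change f (1⁻¹ * t) = f t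
    simp
  map_mul' g h := by
    ext f t
    change f ((g * h)⁻¹ * t) = f (h⁻¹ * (g⁻¹ * t))
    rw [mul_inv_rev, mul_assoc]

open scoped BoundedContinuousFunction in
/-- Equivariant continuous family of means. -/
theorem exists_means (G : Type u) [Group G] [TopologicalSpace G] [DiscreteTopology G] (Y : Type u)
    [TopologicalSpace Y] [CompactSpace Y] [T2Space Y] [MulAction G Y] [ContinuousConstSMul G Y]
    (hY : IsFurstenberg G Y) :
    ∃ m : Y → ((G →ᵇ ℝ) →ₗ[ℝ] ℝ), (∀ F, Continuous fun y => m y F) ∧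
      (∀ y F, (∀ t, 0 ≤ F t) → 0 ≤ m y F) ∧ (∀ y, m y 1 = 1) ∧
      ∀ (g : G) (y : Y) (F F' : G →ᵇ ℝ), (∀ t, F' t = F (g * t)) → m (g • y) F = m y F' := by
  let K : Set (WeakDual ℝ (G →ᵇ ℝ)) := {m | (∀ F, (∀ t, 0 ≤ F t) → 0 ≤ m F) ∧ m 1 = 1}
  have hb : ∀ m ∈ K, ∀ e, |m e| ≤ ‖e‖ := by
    rintro m ⟨hp, h1⟩ e
    have hs : ∀ c : ℝ, m (c • 1) = c := fun c => by rw [map_smul, h1]; simp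
    rw [abs_le]
    constructor
    · have := hp (e + ‖e‖ • 1) (fun t => by
        have := abs_le.1 (e.norm_coe_le_norm t)
        change 0 ≤ e t + ‖e‖ * 1
        linarith [this.1])
      rw [map_add, hs] at this
      linarith
    · have := hp (‖e‖ • 1 - e) (fun t => by
        have := abs_le.1 (e.norm_coe_le_norm t)
        change 0 ≤ ‖e‖ * 1 - e t
        linarith [this.2])
      rw [map_sub, hs] at this
      linarith
  have hcl : IsClosed K := by
    have : K = (⋂ F : G →ᵇ ℝ, ⋂ _ : ∀ t, 0 ≤ F t, {m : WeakDual ℝ (G →ᵇ ℝ) | 0 ≤ m F}) ∩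
        {m | m 1 = 1} := by
      ext m
      simp [K]
    rw [this]
    refine IsClosed.inter (isClosed_iInter fun F => isClosed_iInter fun _ =>
      isClosed_le continuous_const (WeakDual.eval_continuous F)) 
      (isClosed_eq (WeakDual.eval_continuous 1) continuous_const)
  have hK : IsCompact K := by
    refine (WeakDual.isCompact_closedBall (𝕜 := ℝ) (E := G →ᵇ ℝ) 0 1).of_isClosed_subset hcl ?_
    intro m hm
    change WeakDual.toStrongDual m ∈ Metric.closedBall 0 1
    rw [mem_closedBall_zero_iff]
    refine ContinuousLinearMap.opNorm_le_bound _ zero_le_one fun e => ?_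
    rw [one_mul]
    exact hb m hm e
  have hKc : Convex ℝ K := by
    rintro m ⟨hm, hm1⟩ n ⟨hn, hn1⟩ a b ha hb hab
    refine ⟨fun F hF => ?_, ?_⟩
    · change 0 ≤ a * m F + b * n F
      have := hm F hF
      have := hn F hF
      positivity
    · change a * m 1 + b * n 1 = 1
      rw [hm1, hn1]; linarith
  have hKn : K.Nonempty :=
    ⟨StrongDual.toWeakDual (BoundedContinuousFunction.evalCLM ℝ (1 : G)), fun F hF => hF 1, rfl⟩
  obtain ⟨q, hq, hqK, hqe⟩ := exists_boundary_map G Y hY (transl G) K hK hKc hKn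
    (by
      rintro g m ⟨hm, hm1⟩
      exact ⟨fun F hF => hm _ fun t => hF _, hm1⟩) hb
  refine ⟨fun y => (WeakDual.toStrongDual (q y) : (G →ᵇ ℝ) →ₗ[ℝ] ℝ), fun F => ?_,
    fun y F hF => (hqK y).1 F hF, fun y => (hqK y).2, ?_⟩
  · exact (WeakDual.eval_continuous F).comp hq
  · intro g y F F' h
    change q (g • y) F = q y F'
    rw [hqe]
    congr 1
    ext t
    rw [h]
    change F (g⁻¹⁻¹ * t) = _
    rw [inv_inv]

open scoped BoundedContinuousFunction in
/-- Bounded function on a discrete space. -/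
def bfun {G : Type u} [TopologicalSpace G] [DiscreteTopology G] (f : G → ℝ) (C : ℝ)
    (h : ∀ t, |f t| ≤ C) : G →ᵇ ℝ :=
  BoundedContinuousFunction.ofNormedAddCommGroup f continuous_of_discreteTopology C h

/-- Pull back of a continuous function along an orbit map. -/
def pull {G : Type u} [Group G] [TopologicalSpace G] [DiscreteTopology G] {Y : Type u}
    [TopologicalSpace Y] [CompactSpace Y] [MulAction G Y] (y₀ : Y) (h : C(Y, ℝ)) :
    BoundedContinuousFunction G ℝ :=
  bfun (fun t => h (t • y₀)) ‖h‖ fun t => h.norm_coe_le_norm (t • y₀)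

open scoped BoundedContinuousFunction in
theorem rigid {G : Type u} [Group G] [TopologicalSpace G] [DiscreteTopology G] {Y : Type u}
    [TopologicalSpace Y] [CompactSpace Y] [T2Space Y] [MulAction G Y] [ContinuousConstSMul G Y]
    (hY : IsBoundary G Y) (m : Y → ((G →ᵇ ℝ) →ₗ[ℝ] ℝ)) (hmc : ∀ F, Continuous fun y => m y F)
    (hmp : ∀ y F, (∀ t, 0 ≤ F t) → 0 ≤ m y F) (hm1 : ∀ y, m y 1 = 1)
    (hme : ∀ (g : G) (y : Y) (F F' : G →ᵇ ℝ), (∀ t, F' t = F (g * t)) → m (g • y) F = m y F')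
    (y₀ y : Y) (h : C(Y, ℝ)) : m y (pull y₀ h) = h y := by
  let k : C(Y, ℝ) := ⟨fun z => m z (pull y₀ h), hmc _⟩
  let f : C(Y, ℝ) := ⟨fun z => |h z - h y| + |k z - k y|, by fun_prop⟩
  have hf : f y = 0 := by change |h y - h y| + |k y - k y| = 0; simp
  let Λ : C(Y, ℝ) →ₗ[ℝ] ℝ :=
    { toFun := fun f => (f y + m y (pull y₀ f)) / 2
      map_add' := by
        intro a b
        have : (pull y₀ (a + b) : G →ᵇ ℝ) = pull y₀ a + pull y₀ b := rfl
        rw [this, map_add, ContinuousMap.add_apply]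
        ring
      map_smul' := by
        intro c a
        have : (pull y₀ (c • a) : G →ᵇ ℝ) = c • pull y₀ a := rfl
        rw [this, map_smul, ContinuousMap.smul_apply]
        simp only [smul_eq_mul, RingHom.id_apply]
        ring }
  have hkey : ∀ ε > 0, |k y - h y| ≤ 4 * ε := by
    intro ε hε
    obtain ⟨g, hg⟩ := hY.exists_lt Λ (by
      intro f hf
      have h1 : 0 ≤ f y := hf y
      have h2 : 0 ≤ m y (pull y₀ f) := hmp _ _ fun t => hf _
      change 0 ≤ (f y + m y (pull y₀ f)) / 2
      positivity) (by
      change ((1 : ℝ) + m y (pull y₀ 1)) / 2 = 1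
      have : (pull y₀ 1 : G →ᵇ ℝ) = 1 := rfl
      rw [this, hm1]; norm_num) y f hf ε hε
    have hfn : ∀ z, 0 ≤ f z := fun z => by
      change 0 ≤ |h z - h y| + |k z - k y|
      positivity
    have hg' : (f (g • y) + m y (pull y₀ (f.comp ⟨(g • ·), continuous_const_smul g⟩))) / 2 < ε := hg
    have he : m (g • y) (pull y₀ f) = m y (pull y₀ (f.comp ⟨(g • ·), continuous_const_smul g⟩)) := by
      apply hme
      intro t
      change f (g • t • y₀) = f ((g * t) • y₀)
      rw [mul_smul]
    rw [← he] at hg'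
    have hn1 := hfn (g • y)
    have hn2 : 0 ≤ m (g • y) (pull y₀ f) := hmp _ _ fun t => hfn _
    have hA : |h (g • y) - h y| + |k (g • y) - k y| < 2 * ε := by
      change f (g • y) < 2 * ε
      linarith
    have hB : |k (g • y) - h y| ≤ m (g • y) (pull y₀ f) := by
      have hc : m (g • y) (pull y₀ h - h y • 1) = k (g • y) - h y := by
        rw [map_sub, map_smul, hm1]
        simp [k]
      rw [← hc, abs_le]
      constructor
      · have := hmp (g • y) (pull y₀ f + (pull y₀ h - h y • 1)) (fun t => by
          change 0 ≤ (|h (t • y₀) - h y| + |k (t • y₀) - k y|) + (h (t • y₀) - h y * 1)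
          have := neg_abs_le (h (t • y₀) - h y)
          have := abs_nonneg (k (t • y₀) - k y)
          linarith)
        rw [map_add] at this
        linarith
      · have := hmp (g • y) (pull y₀ f - (pull y₀ h - h y • 1)) (fun t => by
          change 0 ≤ (|h (t • y₀) - h y| + |k (t • y₀) - k y|) - (h (t • y₀) - h y * 1)
          have := le_abs_self (h (t • y₀) - h y)
          have := abs_nonneg (k (t • y₀) - k y)
          linarith)
        rw [map_sub] at this
        linarith
    have hC := abs_nonneg (h (g • y) - h y)
    have : |k y - h y| ≤ |k (g • y) - h y| + |k (g • y) - k y| := by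
      have := abs_sub_le (k y) (k (g • y)) (h y)
      rw [abs_sub_comm (k y) (k (g • y))] at this
      linarith
    linarith
  have h0 : |k y - h y| ≤ 0 := by
    refine le_of_forall_pos_le_add fun ε hε => ?_
    have := hkey (ε / 4) (by positivity)
    linarith
  have := abs_nonpos_iff.1 h0
  change k y = h y
  linarith

open scoped BoundedContinuousFunction in
theorem extrDisc {G : Type u} [Group G] [TopologicalSpace G] [DiscreteTopology G] {Y : Type u}
    [TopologicalSpace Y] [CompactSpace Y] [T2Space Y] [MulAction G Y] [ContinuousConstSMul G Y]
    (hY : IsBoundary G Y) (m : Y → ((G →ᵇ ℝ) →ₗ[ℝ] ℝ)) (hmc : ∀ F, Continuous fun y => m y F)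
    (hmp : ∀ y F, (∀ t, 0 ≤ F t) → 0 ≤ m y F) (hm1 : ∀ y, m y 1 = 1)
    (hme : ∀ (g : G) (y : Y) (F F' : G →ᵇ ℝ), (∀ t, F' t = F (g * t)) → m (g • y) F = m y F') :
    ExtremallyDisconnected Y := by
  classical
  obtain ⟨y₀⟩ := hY.1
  let ind : Set Y → (G →ᵇ ℝ) := fun U => bfun (fun t => if t • y₀ ∈ U then 1 else 0) 1
    (fun t => by split_ifs <;> simp)
  have hind : ∀ U t, ind U t = if t • y₀ ∈ U then 1 else 0 := fun U t => rfl
  have hge : ∀ (U : Set Y), IsOpen U → ∀ x ∈ U, 1 ≤ m x (ind U) := by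
    intro U hU x hx
    obtain ⟨f, hf0, hf1, hf⟩ := exists_continuous_zero_one_of_isClosed hU.isClosed_compl
      (isClosed_singleton (x := x)) (by simpa using hx)
    have h1 := rigid hY m hmc hmp hm1 hme y₀ x f
    have h2 : f x = 1 := hf1 rfl
    have h3 := hmp x (ind U - pull y₀ f) (fun t => by
      change 0 ≤ (if t • y₀ ∈ U then (1 : ℝ) else 0) - f (t • y₀)
      split_ifs with h
      · linarith [(hf (t • y₀)).2]
      · have : f (t • y₀) = 0 := hf0 h
        linarith)
    rw [map_sub] at h3
    linarith
  constructor
  intro U hU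
  have hV : IsOpen (closure U)ᶜ := isClosed_closure.isOpen_compl
  have hcl : ∀ x ∈ closure U, 1 ≤ m x (ind U) := by
    have hc : IsClosed {x | 1 ≤ m x (ind U)} := isClosed_le continuous_const (hmc _)
    exact fun x hx => closure_minimal (fun x hx => hge U hU x hx) hc hx
  have hout : ∀ x ∈ (closure U)ᶜ, m x (ind U) ≤ 0 := by
    intro x hx
    have h1 := hge _ hV x hx
    have h3 := hmp x (1 - ind U - ind (closure U)ᶜ) (fun t => by
      change 0 ≤ 1 - ind U t - ind (closure U)ᶜ t
      rw [hind, hind]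
      have := @subset_closure _ _ U (t • y₀)
      by_cases h : t • y₀ ∈ U
      · have := this h
        simp [h, this]
      · split_ifs <;> simp)
    rw [map_sub, map_sub, hm1] at h3
    linarith
  have : closure U = {x | 0 < m x (ind U)} := by
    ext x
    constructor
    · intro hx
      exact lt_of_lt_of_le one_pos (hcl x hx)
    · intro hx
      by_contra h
      exact absurd (hout x h) (not_le.2 hx)
  rw [this]
  exact isOpen_lt continuous_const (hmc _)

theorem fix_clopen {G : Type u} [Group G] {Y : Type u}
    [TopologicalSpace Y] [CompactSpace Y] [T2Space Y] [MulAction G Y] [ContinuousConstSMul G Y]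
    (h : ExtremallyDisconnected Y) (s : G) : IsClopen {x : Y | s • x = x} :=
  ⟨isClosed_eq (continuous_const_smul s) continuous_id, frolik (Homeomorph.smul s)⟩

theorem exists_transversal {G : Type u} [Group G] (H : Subgroup G) :
    ∃ r : G → G, (∀ t, r t ∈ H) ∧ ∀ h ∈ H, ∀ t, r (h * t) = h * r t := by
  let σ := QuotientGroup.rightRel H
  refine ⟨fun t => t * (Quotient.out (Quotient.mk σ t))⁻¹, fun t => ?_, fun h hh t => ?_⟩
  · have : σ (Quotient.out (Quotient.mk σ t)) t := Quotient.mk_out (s := σ) t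
    rwa [QuotientGroup.rightRel_apply] at this
  · have : Quotient.mk σ (h * t) = Quotient.mk σ t := by
      apply Quotient.sound
      change σ (h * t) t
      rw [QuotientGroup.rightRel_apply]
      simpa using hh
    simp only [this, mul_assoc]

open scoped BoundedContinuousFunction in
theorem reiter {G : Type u} [Group G] [TopologicalSpace G] [DiscreteTopology G]
    (H : Subgroup G) (μ : (G →ᵇ ℝ) →ₗ[ℝ] ℝ) (hp : ∀ F, (∀ t, 0 ≤ F t) → 0 ≤ μ F) (h1 : μ 1 = 1)
    (hinv : ∀ h ∈ H, ∀ F F' : G →ᵇ ℝ, (∀ t, F' t = F (h * t)) → μ F = μ F')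
    (S : Finset G) (hS : ∀ s ∈ S, s ∈ H) (ε : ℝ) (hε : 0 < ε) :
    ∃ f : G → ℝ, (∀ t, 0 ≤ f t) ∧ HasSum f 1 ∧ (∀ t, t ∉ H → f t = 0) ∧
      ∀ s ∈ S, Summable (fun t => |f (s⁻¹ * t) - f t|) ∧ ∑' t, |f (s⁻¹ * t) - f t| < ε := by
  classical
  let P := lp (fun _ : G => ℝ) 1
  let C : Set (S → P) := {v | ∃ f : G → ℝ, (∀ t, 0 ≤ f t) ∧ HasSum f 1 ∧ (∀ t, t ∉ H → f t = 0) ∧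
    ∀ (s : S) t, (v s : G → ℝ) t = f (s.1⁻¹ * t) - f t}
  have hC : Convex ℝ C := by
    rintro v ⟨f, hf, hfs, hf0, hfv⟩ w ⟨f', hf', hfs', hf0', hfw⟩ a b ha hb hab
    refine ⟨fun t => a * f t + b * f' t, fun t => ?_, ?_, fun t ht => ?_, fun s t => ?_⟩
    · have := hf t
      have := hf' t
      positivity
    · have := (hfs.mul_left a).add (hfs'.mul_left b)
      rwa [mul_one, mul_one, hab] at this
    · beta_reduce
      rw [hf0 t ht, hf0' t ht]; simp
    · change a * (v s : G → ℝ) t + b * (w s : G → ℝ) t = _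
      rw [hfv, hfw]; ring
  obtain ⟨r, hr, hre⟩ := exists_transversal H
  let δ : G → P := fun t => lp.single 1 t (1 : ℝ)
  have hδ : ∀ t t', (δ t : G → ℝ) t' = if t' = t then 1 else 0 := by
    intro t t'
    simp only [δ, lp.single_apply]
    split_ifs with h
    · subst h; simp
    · simp [h]
  have hδn : ∀ t, ‖δ t‖ = 1 := by
    intro t
    rw [lp.norm_single (by norm_num)]; simp
  have hcl : (0 : S → P) ∈ closure C := by
    by_contra hcon
    obtain ⟨ψ, u, hu0, hu⟩ := geometric_hahn_banach_point_closed hC.closure isClosed_closure hcon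
    rw [map_zero] at hu0
    have hA : ∀ (s : S) (t : G), |ψ (Pi.single s (δ (r t)))| ≤ ‖ψ‖ := by
      intro s t
      have := ψ.le_opNorm (Pi.single s (δ (r t)))
      rw [Pi.norm_single, hδn, mul_one] at this
      exact this
    let A : S → (G →ᵇ ℝ) := fun s => bfun (fun t => ψ (Pi.single s (δ (r t)))) ‖ψ‖ (hA s)
    let A' : S → (G →ᵇ ℝ) := fun s => bfun (fun t => ψ (Pi.single s (δ (r (s.1 * t))))) ‖ψ‖
      (fun t => hA s _)
    have hAA : ∀ s, μ (A s) = μ (A' s) := fun s => hinv s.1 (hS s.1 s.2) _ _ fun t => rfl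
    have hpos := hp (∑ s, (A' s - A s) - u • 1) (fun t => by
      have hmem : (fun s : S => δ (s.1 * r t) - δ (r t)) ∈ C := by
        refine ⟨fun t' => if t' = r t then 1 else 0, fun t' => ?_, ?_, fun t' ht' => ?_,
          fun s t' => ?_⟩
        · beta_reduce
          split_ifs <;> norm_num
        · exact hasSum_ite_eq (r t) 1
        · beta_reduce
          rw [if_neg]
          rintro rfl
          exact ht' (hr t)
        · change (δ (s.1 * r t) : G → ℝ) t' - (δ (r t) : G → ℝ) t' = _
          rw [hδ, hδ]
          simp only [inv_mul_eq_iff_eq_mul]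
      have h2 := hu _ (subset_closure hmem)
      have h3 : (fun s : S => δ (s.1 * r t) - δ (r t)) =
          ∑ s : S, (Pi.single s (δ (r (s.1 * t))) - Pi.single s (δ (r t)) : S → P) := by
        ext1 s
        rw [Finset.sum_apply, Finset.sum_eq_single s]
        · simp [hre s.1 (hS s.1 s.2)]
        · intro b _ hb
          simp [Pi.single_eq_of_ne (Ne.symm hb)]
        · simp
      rw [h3, map_sum] at h2
      have h4 : (∑ s, (A' s - A s) - u • 1 : G →ᵇ ℝ) t =
          ∑ s : S, ψ (Pi.single s (δ (r (s.1 * t))) - Pi.single s (δ (r t)) : S → P) - u := by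
        rw [BoundedContinuousFunction.sub_apply, BoundedContinuousFunction.sum_apply]
        congr 1
        · refine Finset.sum_congr rfl fun s _ => ?_
          rw [map_sub]
          rfl
        · change u * 1 = u
          ring
      rw [h4]
      linarith)
    rw [map_sub, map_sum, map_smul, h1] at hpos
    simp only [map_sub, hAA, sub_self, Finset.sum_const_zero, smul_eq_mul, mul_one] at hpos
    linarith
  obtain ⟨v, ⟨f, hf, hfs, hf0, hfv⟩, hv⟩ := Metric.mem_closure_iff.1 hcl ε hε
  refine ⟨f, hf, hfs, hf0, fun s hs => ?_⟩
  have hn : ‖v ⟨s, hs⟩‖ < ε := by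
    rw [dist_zero_left] at hv
    exact lt_of_le_of_lt (norm_le_pi_norm v _) hv
  have hsum := (memℓp_gen_iff (by norm_num)).1 (lp.memℓp (v ⟨s, hs⟩))
  rw [lp.norm_eq_tsum_rpow (by norm_num)] at hn
  simp only [ENNReal.toReal_one, Real.rpow_one, hfv, Real.norm_eq_abs, div_one] at hsum hn
  exact ⟨hsum, hn⟩

theorem lreg_apply (g : G) (f : ℓ²(G, ℂ)) (h : G) :
    (lreg g f : G → ℂ) h = (f : G → ℂ) (g⁻¹ * h) := by
  unfold lreg lregE
  rfl

theorem sqrt_sub_sq_le (a b : ℝ) (ha : 0 ≤ a) (hb : 0 ≤ b) : (√a - √b) ^ 2 ≤ |a - b| := by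
  have h1 := Real.sq_sqrt ha
  have h2 := Real.sq_sqrt hb
  have h3 := Real.sqrt_nonneg a
  have h4 := Real.sqrt_nonneg b
  rcases le_total b a with h | h
  · have := Real.sqrt_le_sqrt h
    rw [abs_of_nonneg (by linarith)]
    nlinarith
  · have := Real.sqrt_le_sqrt h
    rw [abs_of_nonpos (by linarith)]
    nlinarith

theorem exists_vec {G : Type u} [Group G] (H : Subgroup G) (S : Finset G) (ε : ℝ)
    (f : G → ℝ) (hf : ∀ t, 0 ≤ f t) (hs : HasSum f 1) (hf0 : ∀ t, t ∉ H → f t = 0)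
    (hS : ∀ s ∈ S, Summable (fun t => |f (s⁻¹ * t) - f t|) ∧ ∑' t, |f (s⁻¹ * t) - f t| < ε) :
    ∃ ξ : ℓ²(G, ℂ), ‖ξ‖ = 1 ∧ (∀ t, t ∉ H → (ξ : G → ℂ) t = 0) ∧
      ∀ s ∈ S, ‖lreg s ξ - ξ‖ ^ 2 ≤ ε := by
  have hn : ∀ t, ‖((√(f t) : ℝ) : ℂ)‖ ^ (2 : ℝ≥0∞).toReal = f t := by
    intro t
    rw [Complex.norm_real, Real.norm_eq_abs, abs_of_nonneg (Real.sqrt_nonneg _)]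
    simp [Real.sq_sqrt (hf t)]
  let ξ : ℓ²(G, ℂ) := ⟨fun t => ((√(f t) : ℝ) : ℂ), memℓp_gen (by
    simp only [hn]; exact hs.summable)⟩
  have hξ : ∀ t, (ξ : G → ℂ) t = ((√(f t) : ℝ) : ℂ) := fun t => rfl
  refine ⟨ξ, ?_, fun t ht => ?_, fun s hs => ?_⟩
  · rw [lp.norm_eq_tsum_rpow (by norm_num)]
    simp only [hξ, hn, hs.tsum_eq, Real.one_rpow]
  · rw [hξ, hf0 t ht]; simp
  · have h1 := lp.norm_rpow_eq_tsum (p := 2) (by norm_num) (lreg s ξ - ξ)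
    have h2 : ‖lreg s ξ - ξ‖ ^ 2 = ‖lreg s ξ - ξ‖ ^ (2 : ℝ≥0∞).toReal := by simp
    have hsum := (memℓp_gen_iff (p := 2) (by norm_num)).1 (lp.memℓp (lreg s ξ - ξ))
    rw [h2, h1]
    refine le_trans ?_ (hS s hs).2.le
    refine hsum.tsum_le_tsum ?_ (hS s hs).1
    intro t
    have : (lreg s ξ - ξ : ℓ²(G, ℂ)) t = ((√(f (s⁻¹ * t)) - √(f t) : ℝ) : ℂ) := by
      change (lreg s ξ : G → ℂ) t - (ξ : G → ℂ) t = _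
      rw [lreg_apply, hξ, hξ]
      push_cast
      rfl
    rw [this, Complex.norm_real, Real.norm_eq_abs]
    have := sqrt_sub_sq_le _ _ (hf (s⁻¹ * t)) (hf t)
    rw [← sq_abs] at this
    simpa using this

theorem exists_vec' {G : Type u} [Group G] (H : Subgroup G) (S : Finset G) (ε : ℝ)
    (hε : 0 < ε) (ξ : ℓ²(G, ℂ)) (h1 : ‖ξ‖ = 1) (h0 : ∀ t, t ∉ H → (ξ : G → ℂ) t = 0)
    (hS : ∀ s ∈ S, ‖lreg s ξ - ξ‖ ^ 2 ≤ ε ^ 2) :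
    (∀ s ∈ S, ‖inner ℂ ξ (lreg s ξ) - 1‖ ≤ ε) ∧ ∀ s, s ∉ H → inner ℂ ξ (lreg s ξ) = 0 := by
  constructor
  · intro s hs
    have h2 : inner ℂ ξ (lreg s ξ) - 1 = inner ℂ ξ (lreg s ξ - ξ) := by
      rw [inner_sub_right, inner_self_eq_norm_sq_to_K, h1]; simp
    rw [h2]
    refine (norm_inner_le_norm _ _).trans ?_
    rw [h1, one_mul]
    exact le_of_sq_le_sq (hS s hs) hε.le
  · intro s hs
    rw [lp.inner_eq_tsum]
    refine (tsum_congr fun t => ?_).trans tsum_zero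
    rw [lreg_apply]
    by_cases ht : t ∈ H
    · rw [h0 (s⁻¹ * t), inner_zero_right]
      intro h
      apply hs
      have := H.mul_mem ht (H.inv_mem h)
      simpa using this
    · rw [h0 t ht, inner_zero_left]

theorem exists_state {G : Type u} [Group G] (H : Subgroup G)
    (hv : ∀ (S : Finset G) (ε : ℝ), (∀ s ∈ S, s ∈ H) → 0 < ε → ∃ ξ : ℓ²(G, ℂ), ‖ξ‖ = 1 ∧
      (∀ s ∈ S, ‖inner ℂ ξ (lreg s ξ) - 1‖ ≤ ε) ∧ ∀ s, s ∉ H → inner ℂ ξ (lreg s ξ) = 0) :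
    ∃ φ : redCstar G →ₗ[ℂ] ℂ, (∀ a, ‖φ a‖ ≤ ‖a‖) ∧ φ 1 = 1 ∧ (∀ s ∈ H, φ (uu s) = 1) ∧
      (∀ s, s ∉ H → φ (uu s) = 0) ∧ (∀ a, φ (star a) = star (φ a)) ∧
      ∀ a, 0 ≤ φ (star a * a) := by
  classical
  have hu : ∀ s : G, ((uu s : redCstar G) : ℓ²(G, ℂ) →L[ℂ] ℓ²(G, ℂ)) = lreg s := by
    intro s; unfold uu; rfl
  have hv' : ∀ i : Finset H × ℕ, ∃ ξ : ℓ²(G, ℂ), ‖ξ‖ = 1 ∧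
      (∀ s ∈ i.1, ‖inner ℂ ξ (lreg (s : G) ξ) - 1‖ ≤ 1 / ((i.2 : ℝ) + 1)) ∧
      ∀ s, s ∉ H → inner ℂ ξ (lreg s ξ) = 0 := by
    intro i
    obtain ⟨ξ, h1, h2, h3⟩ := hv (i.1.image Subtype.val) (1 / ((i.2 : ℝ) + 1)) (by
      intro s hs
      obtain ⟨t, -, rfl⟩ := Finset.mem_image.1 hs
      exact t.2) (by positivity)
    exact ⟨ξ, h1, fun s hs => h2 s (Finset.mem_image_of_mem _ hs), h3⟩
  choose ξ h1 h2 h3 using hv'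
  let U : Ultrafilter (Finset H × ℕ) := Ultrafilter.of Filter.atTop
  have hU : (U : Filter (Finset H × ℕ)) ≤ Filter.atTop := Ultrafilter.of_le _
  let v : redCstar G → Finset H × ℕ → ℂ := fun a i =>
    inner ℂ (ξ i) ((a : ℓ²(G, ℂ) →L[ℂ] ℓ²(G, ℂ)) (ξ i))
  have hvb : ∀ a i, ‖v a i‖ ≤ ‖a‖ := by
    intro a i
    refine (norm_inner_le_norm _ _).trans ?_
    rw [h1, one_mul]
    refine ((a : ℓ²(G, ℂ) →L[ℂ] ℓ²(G, ℂ)).le_opNorm _).trans ?_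
    rw [h1, mul_one]
    rfl
  have hlim : ∀ a, ∃ z : ℂ, ‖z‖ ≤ ‖a‖ ∧ Filter.Tendsto (v a) U (nhds z) := by
    intro a
    obtain ⟨z, hz, hle⟩ := (isCompact_closedBall (0 : ℂ) ‖a‖).ultrafilter_le_nhds (U.map (v a)) (by
      rw [Filter.le_principal_iff]
      refine Filter.mem_map.2 (Filter.univ_mem' fun i => ?_)
      simpa using hvb a i)
    exact ⟨z, by simpa using hz, hle⟩
  choose φ hφb hφ using hlim
  let Φ : redCstar G →ₗ[ℂ] ℂ :=
    { toFun := φ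
      map_add' := by
        intro a b
        refine tendsto_nhds_unique (hφ (a + b)) (((hφ a).add (hφ b)).congr fun i => ?_)
        simp only [v]
        rw [← inner_add_right]
        rfl
      map_smul' := by
        intro c a
        refine tendsto_nhds_unique (hφ (c • a)) (((hφ a).const_mul c).congr fun i => ?_)
        simp only [v]
        rw [← inner_smul_right]
        rfl }
  refine ⟨Φ, hφb, ?_, fun s hs => ?_, fun s hs => ?_, fun a => ?_, fun a => ?_⟩
  · refine tendsto_nhds_unique (hφ 1) (tendsto_const_nhds.congr fun i => ?_)
    change (1 : ℂ) = inner ℂ (ξ i) (ξ i)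
    rw [inner_self_eq_norm_sq_to_K, h1]; simp
  · refine tendsto_nhds_unique (hφ (uu s)) ?_
    have : Filter.Tendsto (v (uu s)) Filter.atTop (nhds 1) := by
      rw [tendsto_iff_norm_sub_tendsto_zero]
      have h4 : Filter.Tendsto (fun i : Finset H × ℕ => 1 / ((i.2 : ℝ) + 1)) Filter.atTop
          (nhds 0) := by
        have : Filter.Tendsto (fun i : Finset H × ℕ => i.2) Filter.atTop Filter.atTop := by
          rw [← Filter.prod_atTop_atTop_eq]
          exact Filter.tendsto_snd
        exact tendsto_one_div_add_atTop_nhds_zero_nat.comp this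
      refine squeeze_zero' (Filter.Eventually.of_forall fun i => norm_nonneg _) ?_ h4
      filter_upwards [Filter.eventually_ge_atTop (({⟨s, hs⟩} : Finset H), 0)] with i hi
      have h5 := h2 i ⟨s, hs⟩ (hi.1 (by simp))
      simp only [v, hu]
      exact h5
    exact this.mono_left hU
  · refine tendsto_nhds_unique (hφ (uu s)) (tendsto_const_nhds.congr fun i => ?_)
    simp only [v, hu]
    rw [h3 i s hs]
  · refine tendsto_nhds_unique (hφ (star a)) (((hφ a).star).congr fun i => ?_)
    simp only [v]
    have : ((star a : redCstar G) : ℓ²(G, ℂ) →L[ℂ] ℓ²(G, ℂ)) =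
      ContinuousLinearMap.adjoint (a : ℓ²(G, ℂ) →L[ℂ] ℓ²(G, ℂ)) := rfl
    rw [this, ContinuousLinearMap.adjoint_inner_right]
    exact inner_conj_symm _ _
  · refine ge_of_tendsto (hφ (star a * a)) (Filter.Eventually.of_forall fun i => ?_)
    have : ((star a * a : redCstar G) : ℓ²(G, ℂ) →L[ℂ] ℓ²(G, ℂ)) (ξ i) =
      ContinuousLinearMap.adjoint (a : ℓ²(G, ℂ) →L[ℂ] ℓ²(G, ℂ)) (a.1 (ξ i)) := rfl
    simp only [v]
    rw [this, ContinuousLinearMap.adjoint_inner_right, inner_self_eq_norm_sq_to_K]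
    have h := sq_nonneg ‖a.1 (ξ i)‖
    have h' : (0 : ℂ) ≤ ((‖a.1 (ξ i)‖ ^ 2 : ℝ) : ℂ) := Complex.zero_le_real.2 h
    rw [Complex.ofReal_pow] at h'
    exact h'

theorem state_matrix_pos {G : Type u} [Group G] (φ : redCstar G →ₗ[ℂ] ℂ)
    (hs : ∀ a, φ (star a) = star (φ a)) (hp : ∀ a, 0 ≤ φ (star a * a)) (n : ℕ)
    (N : Matrix (Fin n) (Fin n) (redCstar G)) : ((star N * N).map φ).PosSemidef := by
  have hent : ∀ i j, (star N * N) i j = ∑ k, star (N k i) * N k j := fun i j => by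
    rw [Matrix.mul_apply]; rfl
  refine Matrix.PosSemidef.of_dotProduct_mulVec_nonneg ?_ ?_
  · ext i j
    rw [Matrix.conjTranspose_apply, Matrix.map_apply, Matrix.map_apply, ← hs, hent, hent]
    congr 1
    rw [star_sum]
    simp
  · intro c
    have : star c ⬝ᵥ ((star N * N).map φ).mulVec c =
        ∑ k, φ (star (∑ j, c j • N k j) * ∑ j, c j • N k j) := by
      simp only [dotProduct, Matrix.mulVec, Matrix.map_apply, hent, Pi.star_apply, map_sum,
        star_sum, star_smul, Finset.sum_mul, Finset.mul_sum, smul_mul_assoc, mul_smul_comm,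
        map_smul, smul_eq_mul]
      rw [Finset.sum_comm]
      simp_rw [Finset.sum_comm (f := fun x i => star (c x) * (φ (star (N i x) * N i _) * c _))]
      rw [Finset.sum_comm]
      refine Finset.sum_congr rfl fun k _ => Finset.sum_congr rfl fun j _ =>
        Finset.sum_congr rfl fun i _ => ?_
      ring
    rw [this]
    exact Finset.sum_nonneg fun k _ => hp _

theorem lreg_mul (g h : G) : lreg (g * h) = lreg g * lreg h := by
  ext f t
  change (lreg (g * h) f : G → ℂ) t = (lreg g (lreg h f) : G → ℂ) t
  rw [lreg_apply, lreg_apply, lreg_apply, mul_inv_rev, mul_assoc]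

theorem lreg_one : lreg (1 : G) = 1 := by
  ext f t
  change (lreg (1 : G) f : G → ℂ) t = (f : G → ℂ) t
  rw [lreg_apply, inv_one, one_mul]

theorem lreg_star (g : G) : star (lreg g) = lreg g⁻¹ := by
  have h : star (lreg g) * lreg g = 1 := by
    rw [ContinuousLinearMap.star_eq_adjoint]
    ext1 f
    refine ext_inner_left ℂ fun f' => ?_
    change inner ℂ f' (ContinuousLinearMap.adjoint (lreg g) (lreg g f)) = inner ℂ f' f
    rw [ContinuousLinearMap.adjoint_inner_right]
    unfold lreg
    exact (lregE g).inner_map_map f' f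
  have h2 : lreg g * lreg g⁻¹ = 1 := by rw [← lreg_mul, mul_inv_cancel, lreg_one]
  calc star (lreg g) = star (lreg g) * (lreg g * lreg g⁻¹) := by rw [h2, mul_one]
    _ = lreg g⁻¹ := by rw [← mul_assoc, h, one_mul]

theorem coe_uu (s : G) : ((uu s : redCstar G) : ℓ²(G, ℂ) →L[ℂ] ℓ²(G, ℂ)) = lreg s := by
  unfold uu; rfl

theorem uu_mul (g h : G) : uu g * uu h = uu (g * h) := by
  apply Subtype.ext
  change (uu g : redCstar G).1 * (uu h : redCstar G).1 = _
  rw [coe_uu, coe_uu, coe_uu, lreg_mul]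

theorem adjoin_le_span : ∀ x ∈ StarAlgebra.adjoin ℂ (Set.range (lreg (G := G))),
    x ∈ Submodule.span ℂ (Set.range (lreg (G := G))) := by
  intro x hx
  induction hx using StarAlgebra.adjoin_induction with
  | mem x hx => exact Submodule.subset_span hx
  | algebraMap r =>
    rw [Algebra.algebraMap_eq_smul_one, ← lreg_one]
    exact Submodule.smul_mem _ _ (Submodule.subset_span ⟨1, rfl⟩)
  | add x y _ _ hx hy => exact Submodule.add_mem _ hx hy
  | mul x y _ _ hx hy =>
    have := Submodule.mul_mem_mul hx hy
    rw [Submodule.span_mul_span] at this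
    refine Submodule.span_mono ?_ this
    rintro _ ⟨_, ⟨g, rfl⟩, _, ⟨h, rfl⟩, rfl⟩
    exact ⟨g * h, lreg_mul g h⟩
  | star x hmem hx =>
    clear hmem
    induction hx using Submodule.span_induction with
    | mem x hx =>
      obtain ⟨g, rfl⟩ := hx
      rw [lreg_star]
      exact Submodule.subset_span ⟨_, rfl⟩
    | zero => rw [star_zero]; exact Submodule.zero_mem _
    | add x y _ _ hx hy => rw [star_add]; exact Submodule.add_mem _ hx hy
    | smul c x _ hx => rw [star_smul]; exact Submodule.smul_mem _ _ hx

theorem redCstar_coe : (redCstar G : Set (ℓ²(G, ℂ) →L[ℂ] ℓ²(G, ℂ))) =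
    closure (StarAlgebra.adjoin ℂ (Set.range (lreg (G := G))) : Set _) := by
  unfold redCstar
  exact StarSubalgebra.topologicalClosure_coe _

theorem mem_of_closed (W : Submodule ℂ (redCstar G)) (hW : IsClosed (W : Set (redCstar G)))
    (hu : ∀ s, uu s ∈ W) (a : redCstar G) : a ∈ W := by
  have hc : IsClosed (redCstar G : Set (ℓ²(G, ℂ) →L[ℂ] ℓ²(G, ℂ))) := by
    rw [redCstar_coe]; exact isClosed_closure
  have hcl : IsClosed ((Subtype.val : redCstar G → _) '' (W : Set (redCstar G))) :=
    hc.isClosedEmbedding_subtypeVal.isClosedMap _ hW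
  let W' : Submodule ℂ (ℓ²(G, ℂ) →L[ℂ] ℓ²(G, ℂ)) := W.map (redCstar G).subtype.toLinearMap
  have hW' : (W' : Set _) = (Subtype.val : redCstar G → _) '' (W : Set (redCstar G)) := by
    rfl
  have h1 : Submodule.span ℂ (Set.range (lreg (G := G))) ≤ W' := by
    rw [Submodule.span_le]
    rintro _ ⟨s, rfl⟩
    exact ⟨uu s, hu s, coe_uu s⟩
  have h2 : a.1 ∈ (Subtype.val : redCstar G → _) '' (W : Set (redCstar G)) := by
    have ha : a.1 ∈ (redCstar G : Set (ℓ²(G, ℂ) →L[ℂ] ℓ²(G, ℂ))) := a.2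
    rw [redCstar_coe] at ha
    refine closure_minimal ?_ hcl ha
    intro x hx
    rw [← hW']
    exact h1 (adjoin_le_span x hx)
  obtain ⟨b, hb, hba⟩ := h2
  rw [← Subtype.ext hba]
  exact hb

theorem exists_states (G : Type u) [Group G] (Y : Type u)
    [TopologicalSpace Y] [CompactSpace Y] [T2Space Y] [MulAction G Y] [ContinuousConstSMul G Y]
    (hY : IsFurstenberg G Y) :
    (∀ s : G, IsClopen {x : Y | s • x = x}) ∧ ∀ x : Y,
    ∃ φ : redCstar G →ₗ[ℂ] ℂ, (∀ a, ‖φ a‖ ≤ ‖a‖) ∧ φ 1 = 1 ∧ (∀ s, s • x = x → φ (uu s) = 1) ∧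
      (∀ s, s • x ≠ x → φ (uu s) = 0) ∧ (∀ a, φ (star a) = star (φ a)) ∧
      ∀ a, 0 ≤ φ (star a * a) := by
  letI : TopologicalSpace G := ⊥
  haveI : DiscreteTopology G := ⟨rfl⟩
  obtain ⟨m, hmc, hmp, hm1, hme⟩ := exists_means G Y hY
  refine ⟨fun s => fix_clopen (extrDisc hY.1 m hmc hmp hm1 hme) s, fun x => ?_⟩
  refine exists_state (MulAction.stabilizer G x) fun S ε hS hε => ?_
  obtain ⟨f, hf, hfs, hf0, hfS⟩ := reiter (MulAction.stabilizer G x) (m x) (hmp x) (hm1 x)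
    (fun h hh F F' hF => by
      have := hme h x F F' hF
      rwa [MulAction.mem_stabilizer_iff.1 hh] at this) S hS (ε ^ 2) (by positivity)
  obtain ⟨ξ, h1, h0, hξ⟩ := exists_vec (MulAction.stabilizer G x) S (ε ^ 2) f hf hfs hf0 hfS
  exact ⟨ξ, h1, exists_vec' (MulAction.stabilizer G x) S ε hε ξ h1 h0 hξ⟩


/-- On a Furstenberg boundary, every fixed-point set `Fix(s)` is clopen, and there is a
`G`-equivariant u.c.p. map `C*_λ(G) → C(∂_F G)` sending each `λ_s` to the indicator function
of `Fix(s)`. -/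
theorem exists_equivariant_ucp_to_fix_indicators (G : Type u) [Group G] (Y : Type u)
    [TopologicalSpace Y] [CompactSpace Y] [T2Space Y] [MulAction G Y] [ContinuousConstSMul G Y]
    (hY : IsFurstenberg G Y) :
    (∀ s : G, IsClopen {x : Y | s • x = x}) ∧
    ∃ Φ : redCstar G →L[ℂ] C(Y, ℂ), IsUCP Φ ∧ IsEquivariant Φ ∧
      ∀ (s : G) (x : Y),
        Φ (uu s) x = ({x : Y | s • x = x}).indicator (fun _ => (1 : ℂ)) x := by
  classical
  obtain ⟨hclop, hst⟩ := exists_states G Y hY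
  refine ⟨hclop, ?_⟩
  choose φ hφb hφ1 hφs hφs' hφstar hφp using hst
  have hind : ∀ (s : G) (x : Y),
      φ x (uu s) = ({x : Y | s • x = x}).indicator (fun _ => (1 : ℂ)) x := by
    intro s x
    by_cases h : s • x = x
    · rw [hφs x s h, Set.indicator_of_mem (by exact h)]
    · rw [hφs' x s h, Set.indicator_of_notMem (by exact h)]
  have hcont : ∀ a, Continuous fun x => φ x a := by
    let W : Submodule ℂ (redCstar G) :=
      { carrier := {a | Continuous fun x => φ x a}
        add_mem' := by
          intro a b ha hb
          change Continuous fun x => φ x (a + b)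
          simp only [map_add]
          exact ha.add hb
        zero_mem' := by
          change Continuous fun x => φ x 0
          simp only [map_zero]
          exact continuous_const
        smul_mem' := by
          intro c a ha
          change Continuous fun x => φ x (c • a)
          simp only [map_smul]
          exact ha.const_smul c }
    refine fun a => mem_of_closed W ?_ ?_ a
    · refine isClosed_of_closure_subset fun a ha => ?_
      change Continuous fun x => φ x a
      refine continuous_of_uniform_approx_of_continuous fun u hu => ?_
      obtain ⟨ε, hε, hεu⟩ := Metric.mem_uniformity_dist.1 hu
      obtain ⟨b, hb, hab⟩ := Metric.mem_closure_iff.1 ha ε hε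
      refine ⟨fun x => φ x b, hb, fun x => hεu ?_⟩
      rw [dist_eq_norm, ← map_sub]
      refine lt_of_le_of_lt (hφb x _) ?_
      rwa [← dist_eq_norm]
    · intro s
      change Continuous fun x => φ x (uu s)
      simp only [hind]
      exact continuous_const.indicator (fun x hx => by rw [(hclop s).frontier_eq] at hx; exact hx.elim)
  let Φ₀ : redCstar G →ₗ[ℂ] C(Y, ℂ) :=
    { toFun := fun a => ⟨fun x => φ x a, hcont a⟩
      map_add' := fun a b => by ext x; exact map_add (φ x) a b
      map_smul' := fun c a => by ext x; exact map_smul (φ x) c a }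
  let Φ : redCstar G →L[ℂ] C(Y, ℂ) := Φ₀.mkContinuous 1 (fun a => by
    rw [one_mul]
    exact (ContinuousMap.norm_le _ (norm_nonneg a)).2 fun x => hφb x a)
  have hΦ : ∀ a x, Φ a x = φ x a := fun a x => rfl
  refine ⟨Φ, ⟨?_, ?_⟩, ?_, hind⟩
  · ext x
    rw [hΦ, hφ1]
    rfl
  · rintro n M ⟨N, rfl⟩
    refine exists_matrix_sqrt n _ fun y => ?_
    exact state_matrix_pos (φ y) (hφstar y) (hφp y) n N
  · intro g a y
    rw [hΦ, hΦ]
    let W : Submodule ℂ (redCstar G) :=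
      { carrier := {a | φ y (uu g * a * uu g⁻¹) = φ (g⁻¹ • y) a}
        add_mem' := by
          intro a b ha hb
          change φ y (uu g * (a + b) * uu g⁻¹) = φ (g⁻¹ • y) (a + b)
          rw [mul_add, add_mul, map_add, map_add]
          exact congrArg₂ _ ha hb
        zero_mem' := by
          change φ y (uu g * 0 * uu g⁻¹) = φ (g⁻¹ • y) 0
          rw [mul_zero, zero_mul, map_zero, map_zero]
        smul_mem' := by
          intro c a ha
          change φ y (uu g * (c • a) * uu g⁻¹) = φ (g⁻¹ • y) (c • a)
          rw [mul_smul_comm, smul_mul_assoc, map_smul, map_smul]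
          exact congrArg _ ha }
    refine mem_of_closed W ?_ ?_ a
    · have hc : ∀ z, Continuous fun a => φ z a := fun z =>
        ((φ z).mkContinuous 1 (fun a => by rw [one_mul]; exact hφb z a)).continuous
      exact isClosed_eq ((hc y).comp ((continuous_const.mul continuous_id).mul continuous_const))
        (hc _)
    · intro s
      change φ y (uu g * uu s * uu g⁻¹) = φ (g⁻¹ • y) (uu s)
      rw [uu_mul, uu_mul]
      have hiff : (g * s * g⁻¹) • y = y ↔ s • g⁻¹ • y = g⁻¹ • y := by
        rw [mul_smul, mul_smul]
        exact smul_eq_iff_eq_inv_smul g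
      by_cases h : s • g⁻¹ • y = g⁻¹ • y
      · rw [hφs _ _ h, hφs _ _ (hiff.2 h)]
      · rw [hφs' _ _ h, hφs' _ _ (fun h' => h (hiff.1 h'))]
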